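/- Fix k ≥ 2 and let t be divisible by k, t sufficiently large. Let v = (t/k,...,t/k) and let A = A_{t,k,v} be the balanced-cut intersection matrix (columns indexed by k-subsets of [t], rows by partitions of [t] into k parts of size t/k, entry 1 iff the k-subset is a transversal). Then rank(A) = C(t,k) - t + 1. -/

import Mathlib

open scoped Classical

/-- Partitions of `[t]` into `k` parts of size `t/k` each. -/
def BalancedPartition (t k : ℕ) : Type :=
  {P : Finset (Finset (Fin t)) // P.card = k ∧ (∀ S ∈ P, S.card = t / k) ∧
    ∀ a : Fin t, ∃! S, S ∈ P ∧ a ∈ S}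

noncomputable instance (t k : ℕ) : Fintype (BalancedPartition t k) :=
  Subtype.fintype _

/-- The balanced-cut intersection matrix `A_{t,k,(t/k,…,t/k)}`: entry 1 iff the `k`-set is a
transversal of the partition. -/
noncomputable def cutMatrix (t k : ℕ) :
    Matrix (BalancedPartition t k) {S : Finset (Fin t) // S.card = k} ℚ :=
  fun P X => if ∀ S ∈ P.1, ((X : Finset (Fin t)) ∩ S).card = 1 then 1 else 0


namespace CutRank

variable {α : Type*} [DecidableEq α]

/-- Sum of `g` over all transversals of a list of sets. -/
noncomputable def T : List (Finset α) → (Finset α → ℚ) → ℚ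
  | [], g => g ∅
  | V :: Vs, g => ∑ v ∈ V, T Vs (fun Y => g (insert v Y))

/-- Union of a list of sets. -/
def U : List (Finset α) → Finset α
  | [] => ∅
  | V :: Vs => V ∪ U Vs

lemma mem_U (Vs : List (Finset α)) (x : α) : x ∈ U Vs ↔ ∃ V ∈ Vs, x ∈ V := by
  induction Vs with
  | nil => simp [U]
  | cons V Vs ih => simp [U, ih]

lemma T_sub (Vs : List (Finset α)) : ∀ g h : Finset α → ℚ,
    T Vs (fun Y => g Y - h Y) = T Vs g - T Vs h := by
  induction Vs with
  | nil => intro g h; rfl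
  | cons V Vs ih =>
    intro g h
    simp only [T]
    rw [← Finset.sum_sub_distrib]
    exact Finset.sum_congr rfl fun v _ => ih _ _

lemma T_add (Vs : List (Finset α)) : ∀ g h : Finset α → ℚ,
    T Vs (fun Y => g Y + h Y) = T Vs g + T Vs h := by
  induction Vs with
  | nil => intro g h; rfl
  | cons V Vs ih =>
    intro g h
    simp only [T]
    rw [← Finset.sum_add_distrib]
    exact Finset.sum_congr rfl fun v _ => ih _ _

lemma T_congr (Vs : List (Finset α)) : ∀ g h : Finset α → ℚ,
    (∀ Y, Y ⊆ U Vs → g Y = h Y) → T Vs g = T Vs h := by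
  induction Vs with
  | nil => intro g h H; exact H ∅ (by simp)
  | cons V Vs ih =>
    intro g h H
    simp only [T]
    refine Finset.sum_congr rfl fun v hv => ih _ _ fun Y hY => H _ ?_
    intro x hx
    rw [Finset.mem_insert] at hx
    simp only [U, Finset.mem_union]
    rcases hx with rfl | hx
    · exact Or.inl hv
    · exact Or.inr (hY hx)

lemma T_const (n : ℕ) (Vs : List (Finset α)) (hc : ∀ V ∈ Vs, V.card = n) (c : ℚ) :
    T Vs (fun _ => c) = (n : ℚ) ^ Vs.length * c := by
  induction Vs with
  | nil => simp [T]
  | cons V Vs ih =>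
    simp only [T]
    rw [ih (fun W hW => hc W (by simp [hW]))]
    simp [hc V (by simp), pow_succ]
    ring

lemma disj_U {V : Finset α} {Vs : List (Finset α)} (h : ∀ W ∈ Vs, Disjoint V W) :
    Disjoint V (U Vs) := by
  rw [Finset.disjoint_left]
  intro x hx hx'
  obtain ⟨W, hW, hxW⟩ := (mem_U Vs x).1 hx'
  exact Finset.disjoint_left.1 (h W hW) hx hxW

lemma card_U (n : ℕ) (Vs : List (Finset α)) (hc : ∀ V ∈ Vs, V.card = n)
    (hd : Vs.Pairwise Disjoint) : (U Vs).card = Vs.length * n := by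
  induction Vs with
  | nil => simp [U]
  | cons V Vs ih =>
    rw [List.pairwise_cons] at hd
    simp only [U]
    rw [Finset.card_union_of_disjoint (disj_U hd.1), hc V (by simp),
      ih (fun W hW => hc W (by simp [hW])) hd.2]
    simp; ring

lemma T_lin (n : ℕ) (a : α → ℚ) (Vs : List (Finset α)) (hc : ∀ V ∈ Vs, V.card = n)
    (hd : Vs.Pairwise Disjoint) :
    n * T Vs (fun X => ∑ i ∈ X, a i) = (n : ℚ) ^ Vs.length * ∑ i ∈ U Vs, a i := by
  induction Vs with
  | nil => simp [T, U]
  | cons V Vs ih =>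
    rw [List.pairwise_cons] at hd
    have hc' : ∀ W ∈ Vs, W.card = n := fun W hW => hc W (by simp [hW])
    have hdis := disj_U hd.1
    have ih' := ih hc' hd.2
    have key : ∀ v ∈ V, T Vs (fun Y => ∑ i ∈ insert v Y, a i)
        = (n : ℚ) ^ Vs.length * a v + T Vs (fun X => ∑ i ∈ X, a i) := by
      intro v hv
      rw [← T_const n Vs hc', ← T_add]
      apply T_congr
      intro Y hY
      rw [Finset.sum_insert]
      intro hvY
      exact Finset.disjoint_left.1 hdis hv (hY hvY)
    simp only [T, U]
    rw [Finset.sum_congr rfl key, Finset.sum_add_distrib, Finset.sum_union hdis,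
      ← Finset.mul_sum, Finset.sum_const, hc V (by simp), nsmul_eq_mul, mul_add, ih']
    simp only [List.length_cons, pow_succ]
    ring

/-- `T` as a sum over actual transversals. -/
lemma T_eq_sum [Fintype α] (Vs : List (Finset α)) (hd : Vs.Pairwise Disjoint) :
    ∀ g : Finset α → ℚ, T Vs g =
      ∑ X ∈ (Finset.univ : Finset (Finset α)).filter
        (fun X => X ⊆ U Vs ∧ ∀ V ∈ Vs, (X ∩ V).card = 1), g X := by
  induction Vs with
  | nil =>
    intro g
    have : (Finset.univ : Finset (Finset α)).filter
        (fun X => X ⊆ U [] ∧ ∀ V ∈ ([] : List (Finset α)), (X ∩ V).card = 1) = {∅} := by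
      ext X; simp [U]
    rw [this]; simp [T]
  | cons V Vs ih =>
    intro g
    rw [List.pairwise_cons] at hd
    have hdis := disj_U hd.1
    simp only [T]
    rw [Finset.sum_congr rfl fun v _ => ih hd.2 _, ← Finset.sum_product']
    refine Finset.sum_bij (fun p _ => insert p.1 p.2) ?_ ?_ ?_ ?_
    · rintro ⟨v, Y⟩ h
      simp only [Finset.mem_product, Finset.mem_filter, Finset.mem_univ, true_and] at h ⊢
      obtain ⟨hv, hY, hT⟩ := h
      refine ⟨?_, ?_⟩
      · intro x hx
        rw [Finset.mem_insert] at hx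
        simp only [U, Finset.mem_union]
        rcases hx with rfl | hx
        · exact Or.inl hv
        · exact Or.inr (hY hx)
      · intro W hW
        rw [List.mem_cons] at hW
        rcases hW with rfl | hW
        · have : insert v Y ∩ W = {v} := by
            ext x
            simp only [Finset.mem_inter, Finset.mem_insert, Finset.mem_singleton]
            constructor
            · rintro ⟨h1 | h1, h2⟩
              · exact h1
              · exact absurd (hY h1) (Finset.disjoint_left.1 hdis h2)
            · rintro rfl; exact ⟨Or.inl rfl, hv⟩
          rw [this]; simp
        · rw [Finset.insert_inter_of_notMem, hT W hW]
          exact Finset.disjoint_left.1 (hd.1 W hW) hv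
    · rintro ⟨v, Y⟩ h ⟨v', Y'⟩ h' heq
      simp only [Finset.mem_product, Finset.mem_filter, Finset.mem_univ, true_and] at h h' heq
      obtain ⟨hv, hY, hT⟩ := h
      obtain ⟨hv', hY', hT'⟩ := h'
      have hvY : ∀ x ∈ V, x ∉ Y := fun x hx hx' => Finset.disjoint_left.1 hdis hx (hY hx')
      have hvY' : ∀ x ∈ V, x ∉ Y' := fun x hx hx' => Finset.disjoint_left.1 hdis hx (hY' hx')
      have e : v = v' := by
        have : v ∈ insert v' Y' := by rw [← heq]; simp
        rw [Finset.mem_insert] at this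
        rcases this with h | h
        · exact h
        · exact absurd h (hvY' v hv)
      subst e
      have : Y = Y' := by
        rw [← Finset.erase_insert (hvY v hv), heq, Finset.erase_insert (hvY' v hv)]
      rw [this]
    · intro X hX
      simp only [Finset.mem_filter, Finset.mem_univ, true_and] at hX
      obtain ⟨hX, hT⟩ := hX
      obtain ⟨v, hv⟩ := Finset.card_eq_one.1 (hT V (by simp))
      have hvX : v ∈ X ∩ V := by rw [hv]; simp
      rw [Finset.mem_inter] at hvX
      refine ⟨(v, X.erase v), ?_, ?_⟩
      · simp only [Finset.mem_product, Finset.mem_filter, Finset.mem_univ, true_and]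
        refine ⟨hvX.2, ?_, ?_⟩
        · intro x hx
          rw [Finset.mem_erase] at hx
          have := hX hx.2
          simp only [U, Finset.mem_union] at this
          rcases this with h | h
          · have : x ∈ X ∩ V := Finset.mem_inter.2 ⟨hx.2, h⟩
            rw [hv, Finset.mem_singleton] at this
            exact absurd this hx.1
          · exact h
        · intro W hW
          rw [← hT W (by simp [hW])]
          congr 1
          ext x
          simp only [Finset.mem_inter, Finset.mem_erase]
          constructor
          · rintro ⟨⟨_, h1⟩, h2⟩; exact ⟨h1, h2⟩
          · rintro ⟨h1, h2⟩
            refine ⟨⟨?_, h1⟩, h2⟩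
            rintro rfl
            exact Finset.disjoint_left.1 (hd.1 W hW) hvX.2 h2
      · exact Finset.insert_erase hvX.1
    · intro p _; rfl

/-- If all `n`-subset sums vanish, the function vanishes. -/
lemma point_zero (W : Finset α) (n : ℕ) (hn : 1 ≤ n) (hW : n + 1 ≤ W.card) (Q : α → ℚ)
    (h : ∀ V ⊆ W, V.card = n → ∑ v ∈ V, Q v = 0) : ∀ e ∈ W, Q e = 0 := by
  intro e he
  have hc : ∀ e' ∈ W, Q e' = Q e := by
    intro e' he'
    by_cases hee : e' = e
    · rw [hee]
    have hcard : n - 1 ≤ ((W.erase e).erase e').card := by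
      rw [Finset.card_erase_of_mem (Finset.mem_erase.2 ⟨hee, he'⟩), Finset.card_erase_of_mem he]
      omega
    obtain ⟨S, hS, hSc⟩ := Finset.exists_subset_card_eq hcard
    have h1 : e ∉ S := fun h => by have := hS h; simp at this
    have h2 : e' ∉ S := fun h => by have := hS h; simp at this
    have hSW : S ⊆ W := hS.trans ((Finset.erase_subset _ _).trans (Finset.erase_subset _ _))
    have a1 := h (insert e S) (Finset.insert_subset he hSW)
      (by rw [Finset.card_insert_of_notMem h1]; omega)
    have a2 := h (insert e' S) (Finset.insert_subset he' hSW)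
      (by rw [Finset.card_insert_of_notMem h2]; omega)
    rw [Finset.sum_insert h1] at a1
    rw [Finset.sum_insert h2] at a2
    linarith
  obtain ⟨S, hS, hSc⟩ := Finset.exists_subset_card_eq (show n ≤ W.card by omega)
  have := h S hS hSc
  rw [Finset.sum_congr rfl fun x hx => hc x (hS hx), Finset.sum_const, hSc, nsmul_eq_mul] at this
  have hn' : (n : ℚ) ≠ 0 := by positivity
  exact (mul_eq_zero.1 this).resolve_left hn'

lemma set_zero (n : ℕ) (hn : 1 ≤ n) (j : ℕ) : ∀ (D : Finset α) (q : Finset α → ℚ),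
    j * n + 1 ≤ D.card →
    (∀ Vs : List (Finset α), Vs.length = j → Vs.Pairwise Disjoint → (∀ V ∈ Vs, V.card = n) →
      (∀ V ∈ Vs, V ⊆ D) → T Vs q = 0) →
    ∀ Y ⊆ D, Y.card = j → q Y = 0 := by
  induction j with
  | zero =>
    intro D q _ h Y _ hY
    have := h [] rfl (by simp) (by simp) (by simp)
    rw [Finset.card_eq_zero.1 hY]
    exact this
  | succ j ih =>
    intro D q hD h Y hYD hY
    obtain ⟨e, Y', heY, rfl, hY'⟩ := Finset.card_eq_succ.1 hY
    have heD : e ∈ D := hYD (by simp)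
    have hexp : (j + 1) * n = j * n + n := by ring
    refine ih (D.erase e) (fun Z => q (insert e Z)) ?_ ?_ Y' ?_ hY'
    · rw [Finset.card_erase_of_mem heD]; omega
    · intro Vs hl hd hc hs
      refine point_zero (D \ U Vs) n hn ?_ (fun x => T Vs (fun Z => q (insert x Z))) ?_ e ?_
      · have := Finset.le_card_sdiff (U Vs) D
        rw [card_U n Vs hc hd, hl] at this
        omega
      · intro V hV hVc
        refine h (V :: Vs) (by simp [hl]) ?_ ?_ ?_
        · rw [List.pairwise_cons]
          refine ⟨fun W hW => ?_, hd⟩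
          rw [Finset.disjoint_left]
          intro x hx hxW
          exact (Finset.mem_sdiff.1 (hV hx)).2 ((mem_U Vs x).2 ⟨W, hW, hxW⟩)
        · intro W hW
          rw [List.mem_cons] at hW
          rcases hW with rfl | hW
          · exact hVc
          · exact hc W hW
        · intro W hW
          rw [List.mem_cons] at hW
          rcases hW with rfl | hW
          · exact hV.trans Finset.sdiff_subset
          · exact (hs W hW).trans (Finset.erase_subset _ _)
      · rw [Finset.mem_sdiff]
        refine ⟨heD, fun hh => ?_⟩
        obtain ⟨W, hW, heW⟩ := (mem_U Vs e).1 hh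
        have := hs W hW heW
        simp at this
    · intro x hx
      rw [Finset.mem_erase]
      refine ⟨?_, hYD (by simp [hx])⟩
      rintro rfl; exact heY hx

lemma graph (A : Finset α) (n : ℕ) (hA : A.card = 2 * n) (G : α → α → ℚ)
    (hs : ∀ x y, G x y = G y x)
    (h : ∀ V W, V ⊆ A → W ⊆ A → V.card = n → W.card = n → Disjoint V W →
      ∑ x ∈ V, ∑ y ∈ W, G x y = 0)
    (u w a b : α) (hu : u ∈ A) (hw : w ∈ A) (ha : a ∈ A) (hb : b ∈ A)
    (huw : u ≠ w) (hua : u ≠ a) (hub : u ≠ b) (hwa : w ≠ a) (hwb : w ≠ b) (hab : a ≠ b) :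
    G u a - G w a - (G u b - G w b) = 0 := by
  have hsub : ({u, w, a, b} : Finset α) ⊆ A := by
    intro x hx
    simp only [Finset.mem_insert, Finset.mem_singleton] at hx
    rcases hx with rfl | rfl | rfl | rfl <;> assumption
  have h4 : ({u, w, a, b} : Finset α).card = 4 := by
    rw [Finset.card_insert_of_notMem (by simp [*]), Finset.card_insert_of_notMem (by simp [*]),
      Finset.card_insert_of_notMem (by simp [*]), Finset.card_singleton]
  have hn : 2 ≤ n := by
    have := Finset.card_le_card hsub
    omega
  have hB : (A \ {u, w, a, b}).card = 2 * n - 4 := by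
    rw [Finset.card_sdiff_of_subset hsub, hA, h4]
  obtain ⟨S, hS, hSc⟩ := Finset.exists_subset_card_eq
    (show n - 2 ≤ (A \ {u, w, a, b}).card by omega)
  obtain ⟨R, hR⟩ : ∃ R, R = (A \ {u, w, a, b}) \ S := ⟨_, rfl⟩
  have hRc : R.card = n - 2 := by
    rw [hR, Finset.card_sdiff_of_subset hS, hB, hSc]; omega
  have hSR : Disjoint S R := by rw [hR]; exact Finset.disjoint_sdiff
  have hRA : R ⊆ A \ {u, w, a, b} := by rw [hR]; exact Finset.sdiff_subset
  have nS : ∀ x ∈ ({u, w, a, b} : Finset α), x ∉ S := fun x hx hx' =>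
    (Finset.mem_sdiff.1 (hS hx')).2 hx
  have nR : ∀ x ∈ ({u, w, a, b} : Finset α), x ∉ R := fun x hx hx' =>
    (Finset.mem_sdiff.1 (hRA hx')).2 hx
  have key : ∀ x y z s : α, x ∈ ({u, w, a, b} : Finset α) → y ∈ ({u, w, a, b} : Finset α) →
      z ∈ ({u, w, a, b} : Finset α) → s ∈ ({u, w, a, b} : Finset α) →
      x ≠ y → x ≠ z → x ≠ s → y ≠ z → y ≠ s → z ≠ s →
      (G x z + (G x s + ∑ r ∈ R, G x r)) + ((G y z + (G y s + ∑ r ∈ R, G y r)) +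
        (∑ p ∈ S, G p z + (∑ p ∈ S, G p s + ∑ p ∈ S, ∑ r ∈ R, G p r))) = 0 := by
    intro x y z s hx hy hz hs' hxy hxz hxs hyz hys hzs
    have x1 : x ∉ insert y S := by simp [hxy, nS x hx]
    have z1 : z ∉ insert s R := by simp [hzs, nR z hz]
    have := h (insert x (insert y S)) (insert z (insert s R))
      (Finset.insert_subset (hsub hx) (Finset.insert_subset (hsub hy)
        (hS.trans Finset.sdiff_subset)))
      (Finset.insert_subset (hsub hz) (Finset.insert_subset (hsub hs')
        (hRA.trans Finset.sdiff_subset)))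
      (by rw [Finset.card_insert_of_notMem x1, Finset.card_insert_of_notMem (nS y hy)]; omega)
      (by rw [Finset.card_insert_of_notMem z1, Finset.card_insert_of_notMem (nR s hs')]; omega)
      (by
        simp only [Finset.disjoint_insert_left, Finset.disjoint_insert_right, Finset.mem_insert,
          not_or]
        have := nR x hx
        have := nR y hy
        have := nS z hz
        have := nS s hs'
        refine ⟨?_, ?_⟩ <;> tauto)
    simpa only [Finset.sum_insert x1, Finset.sum_insert z1, Finset.sum_insert (nS y hy),
      Finset.sum_insert (nR s hs'), Finset.sum_add_distrib] using this
  have mu : u ∈ ({u, w, a, b} : Finset α) := by simp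
  have mw : w ∈ ({u, w, a, b} : Finset α) := by simp
  have ma : a ∈ ({u, w, a, b} : Finset α) := by simp
  have mb : b ∈ ({u, w, a, b} : Finset α) := by simp
  have e1 := key u a w b mu ma mw mb hua huw hub hwa.symm hab hwb
  have e2 := key w a u b mw ma mu mb hwa huw.symm hwb hua.symm hab hub
  have e3 := key u b w a mu mb mw ma hub huw hua hwb.symm hab.symm hwa
  have e4 := key w b u a mw mb mu ma hwb huw.symm hwa hub.symm hab.symm hua
  rw [hs w u, hs a u, hs a w] at *
  have s1 := hs b u
  have s2 := hs b w
  have s3 := hs b a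
  have s4 := hs a u
  have s5 := hs a w
  have s6 := hs w u
  linarith

/-- Four-term identity for functions with vanishing balanced transversal sums. -/
lemma four_term [Fintype α] (n m : ℕ) (hn : 3 ≤ n) (ht : Fintype.card α = (m + 2) * n)
    (F : Finset α → ℚ)
    (H : ∀ Vs : List (Finset α), Vs.length = m + 2 → Vs.Pairwise Disjoint →
      (∀ V ∈ Vs, V.card = n) → T Vs F = 0)
    (u w a b : α)
    (huw : u ≠ w) (hua : u ≠ a) (hub : u ≠ b) (hwa : w ≠ a) (hwb : w ≠ b) (hab : a ≠ b)
    (Y : Finset α) (hY : Y.card = m) (hYu : u ∉ Y) (hYw : w ∉ Y) (hYa : a ∉ Y) (hYb : b ∉ Y) :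
    F (insert u (insert a Y)) - F (insert w (insert a Y)) -
      (F (insert u (insert b Y)) - F (insert w (insert b Y))) = 0 := by
  have hexp : (m + 2) * n = m * n + 2 * n := by ring
  refine set_zero n (by omega) m (Finset.univ \ {u, w, a, b})
    (fun Y => F (insert u (insert a Y)) - F (insert w (insert a Y)) -
      (F (insert u (insert b Y)) - F (insert w (insert b Y)))) ?_ ?_ Y ?_ hY
  · have h1 := Finset.le_card_sdiff ({u, w, a, b} : Finset α) Finset.univ
    have h2 : ({u, w, a, b} : Finset α).card ≤ 4 := Finset.card_le_four
    rw [Finset.card_univ, ht] at h1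
    omega
  · intro Vs hl hd hc hsub
    have nm : ∀ x ∈ ({u, w, a, b} : Finset α), x ∈ Finset.univ \ U Vs := by
      intro x hx
      rw [Finset.mem_sdiff]
      refine ⟨Finset.mem_univ _, fun hh => ?_⟩
      obtain ⟨V, hV, hxV⟩ := (mem_U Vs x).1 hh
      exact (Finset.mem_sdiff.1 (hsub V hV hxV)).2 hx
    have := graph (Finset.univ \ U Vs) n
      (by
        rw [Finset.card_sdiff_of_subset (Finset.subset_univ _), Finset.card_univ, ht,
          card_U n Vs hc hd, hl]; omega)
      (fun x y => T Vs (fun Y => F (insert x (insert y Y))))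
      (fun x y => by simp only [Finset.insert_comm x y])
      (by
        intro V W hV hW hVc hWc hVW
        have dd : ∀ V ⊆ Finset.univ \ U Vs, ∀ X ∈ Vs, Disjoint V X := by
          intro V hV X hX
          rw [Finset.disjoint_left]
          intro x hx hxX
          exact (Finset.mem_sdiff.1 (hV hx)).2 ((mem_U Vs x).2 ⟨X, hX, hxX⟩)
        refine H (V :: W :: Vs) (by simp [hl]) ?_ ?_
        · rw [List.pairwise_cons, List.pairwise_cons]
          refine ⟨?_, dd W hW, hd⟩
          intro X hX
          rw [List.mem_cons] at hX
          rcases hX with rfl | hX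
          · exact hVW
          · exact dd V hV X hX
        · intro X hX
          rw [List.mem_cons, List.mem_cons] at hX
          rcases hX with rfl | rfl | hX
          · exact hVc
          · exact hWc
          · exact hc X hX)
      u w a b (nm u (by simp)) (nm w (by simp)) (nm a (by simp)) (nm b (by simp))
      huw hua hub hwa hwb hab
    rw [T_sub, T_sub, T_sub]
    exact this
  · intro x hx
    simp only [Finset.mem_sdiff, Finset.mem_univ, true_and, Finset.mem_insert,
      Finset.mem_singleton, not_or]
    refine ⟨?_, ?_, ?_, ?_⟩ <;> rintro rfl <;> contradiction

/-- Exchange-invariant functions on `j`-subsets are constant. -/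
lemma exch (D : Finset α) (j : ℕ) (φ : Finset α → ℚ)
    (h : ∀ Y ⊆ D, ∀ a ∈ D, ∀ b ∈ D, a ∉ Y → b ∉ Y → a ≠ b → Y.card + 1 = j →
      φ (insert a Y) = φ (insert b Y)) :
    ∀ (N : ℕ) (Z Z' : Finset α), (Z \ Z').card = N → Z ⊆ D → Z' ⊆ D → Z.card = j → Z'.card = j →
      φ Z = φ Z' := by
  intro N
  induction N with
  | zero =>
    intro Z Z' h0 _ _ hc hc'
    rw [Finset.card_eq_zero, Finset.sdiff_eq_empty_iff_subset] at h0
    rw [Finset.eq_of_subset_of_card_le h0 (by omega)]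
  | succ N ih =>
    intro Z Z' h0 hZ hZ' hc hc'
    have h0' : (Z' \ Z).card = N + 1 := by
      rw [← h0]
      exact Finset.card_sdiff_comm (by omega)
    obtain ⟨a, ha⟩ := Finset.card_pos.1 (show 0 < (Z \ Z').card by omega)
    obtain ⟨b, hb⟩ := Finset.card_pos.1 (show 0 < (Z' \ Z).card by omega)
    rw [Finset.mem_sdiff] at ha hb
    have hab : a ≠ b := by rintro rfl; exact ha.2 hb.1
    have hbn : b ∉ Z.erase a := fun hh => hb.2 (Finset.mem_of_mem_erase hh)
    have hce : (Z.erase a).card + 1 = j := by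
      rw [Finset.card_erase_add_one ha.1, hc]
    have e := h (Z.erase a) ((Finset.erase_subset _ _).trans hZ) a (hZ ha.1) b (hZ' hb.1)
      (by simp) hbn hab hce
    rw [Finset.insert_erase ha.1] at e
    rw [e]
    refine ih _ _ ?_ (Finset.insert_subset (hZ' hb.1) ((Finset.erase_subset _ _).trans hZ)) hZ'
      (by rw [Finset.card_insert_of_notMem hbn, hce]) hc'
    have : insert b (Z.erase a) \ Z' = (Z \ Z').erase a := by
      ext x
      simp only [Finset.mem_sdiff, Finset.mem_insert, Finset.mem_erase]
      constructor
      · rintro ⟨rfl | ⟨h1, h2⟩, h3⟩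
        · exact absurd hb.1 h3
        · exact ⟨h1, h2, h3⟩
      · rintro ⟨h1, h2, h3⟩; exact ⟨Or.inr ⟨h1, h2⟩, h3⟩
    rw [this, Finset.card_erase_of_mem (Finset.mem_sdiff.2 ha), h0]
    rfl

lemma avoid [Fintype α] (B : Finset α) (j : ℕ) (h : j + B.card ≤ Fintype.card α) :
    ∃ Z : Finset α, Z.card = j ∧ ∀ x ∈ B, x ∉ Z := by
  obtain ⟨Z, hZ, hc⟩ := Finset.exists_subset_card_eq
    (show j ≤ (Finset.univ \ B).card by
      rw [Finset.card_sdiff_of_subset (Finset.subset_univ _), Finset.card_univ]; omega)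
  exact ⟨Z, hc, fun x hx hxZ => (Finset.mem_sdiff.1 (hZ hxZ)).2 hx⟩

lemma affine_form [Fintype α] (m : ℕ) (ht : m + 4 ≤ Fintype.card α) (F : Finset α → ℚ)
    (h4 : ∀ u w a b : α, u ≠ w → u ≠ a → u ≠ b → w ≠ a → w ≠ b → a ≠ b →
      ∀ Y : Finset α, Y.card = m → u ∉ Y → w ∉ Y → a ∉ Y → b ∉ Y →
      F (insert u (insert a Y)) - F (insert w (insert a Y)) -
      (F (insert u (insert b Y)) - F (insert w (insert b Y))) = 0) :
    ∃ a : α → ℚ, ∀ X : Finset α, X.card = m + 2 → F X = ∑ i ∈ X, a i := by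
  have hA : ∀ u w : α, u ≠ w → ∀ Z Z' : Finset α, Z.card = m + 1 → Z'.card = m + 1 →
      u ∉ Z → w ∉ Z → u ∉ Z' → w ∉ Z' →
      F (insert u Z) - F (insert w Z) = F (insert u Z') - F (insert w Z') := by
    intro u w huw Z Z' hZ hZ' h1 h2 h3 h4'
    have sub : ∀ Z : Finset α, u ∉ Z → w ∉ Z → Z ⊆ Finset.univ \ {u, w} := by
      intro Z h1 h2 x hx
      simp only [Finset.mem_sdiff, Finset.mem_univ, true_and, Finset.mem_insert,
        Finset.mem_singleton, not_or]
      constructor <;> rintro rfl <;> contradiction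
    refine exch (Finset.univ \ {u, w}) (m + 1) (fun Z => F (insert u Z) - F (insert w Z))
      ?_ _ Z Z' rfl (sub Z h1 h2) (sub Z' h3 h4') hZ hZ'
    intro Y hY a ha b hb haY hbY hab hYc
    simp only [Finset.mem_sdiff, Finset.mem_univ, true_and, Finset.mem_insert,
        Finset.mem_singleton, not_or] at ha hb
    have := h4 u w a b huw (Ne.symm ha.1) (Ne.symm hb.1) (Ne.symm ha.2) (Ne.symm hb.2) hab Y
      (by omega) (fun hh => by have := hY hh; simp at this)
      (fun hh => by have := hY hh; simp at this) haY hbY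
    linarith
  obtain ⟨o⟩ : Nonempty α := Fintype.card_pos_iff.1 (by omega)
  have hz : ∀ u : α, ∃ Z : Finset α, Z.card = m + 1 ∧ ∀ x ∈ ({u, o} : Finset α), x ∉ Z := by
    intro u
    apply avoid
    have : ({u, o} : Finset α).card ≤ 2 := Finset.card_le_two
    omega
  choose Zf hZf using hz
  obtain ⟨d, hd⟩ : ∃ d : α → ℚ, ∀ u, d u = F (insert u (Zf u)) - F (insert o (Zf u)) :=
    ⟨_, fun _ => rfl⟩
  have hdo : ∀ u (Z : Finset α), Z.card = m + 1 → u ∉ Z → o ∉ Z →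
      F (insert u Z) - F (insert o Z) = d u := by
    intro u Z hZ h1 h2
    rw [hd]
    by_cases huo : u = o
    · subst huo; simp
    · exact hA u o huo Z (Zf u) hZ (hZf u).1 h1 h2 ((hZf u).2 u (by simp))
        ((hZf u).2 o (by simp))
  have hcst := exch (Finset.univ : Finset α) (m + 2) (fun X => F X - ∑ i ∈ X, d i) (by
    intro Y _ a _ b _ haY hbY hab hYc
    simp only [Finset.sum_insert haY, Finset.sum_insert hbY]
    obtain ⟨Z, hZc, hZ⟩ := avoid ({a, b, o} : Finset α) (m + 1) (by
      have : ({a, b, o} : Finset α).card ≤ 3 := Finset.card_le_three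
      omega)
    have e1 := hA a b hab Y Z (by omega) hZc haY hbY (hZ a (by simp)) (hZ b (by simp))
    have e2 := hdo a Z hZc (hZ a (by simp)) (hZ o (by simp))
    have e3 := hdo b Z hZc (hZ b (by simp)) (hZ o (by simp))
    linarith)
  obtain ⟨X0, hX0, -⟩ := avoid (∅ : Finset α) (m + 2) (by simp; omega)
  refine ⟨fun i => d i + (F X0 - ∑ i ∈ X0, d i) / (m + 2), fun X hX => ?_⟩
  have := hcst _ X X0 rfl (Finset.subset_univ _) (Finset.subset_univ _) hX hX0
  rw [Finset.sum_add_distrib, Finset.sum_const, hX, nsmul_eq_mul, ← this]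
  have hm : (m : ℚ) + 2 ≠ 0 := by positivity
  push_cast
  field_simp
  ring

/-- The sum map from point functions to functions on `k`-sets. -/
noncomputable def L (α : Type*) (k : ℕ) : (α → ℚ) →ₗ[ℚ] ({S : Finset α // S.card = k} → ℚ) where
  toFun a X := ∑ i ∈ X.1, a i
  map_add' a b := by ext X; simp [Finset.sum_add_distrib]
  map_smul' c a := by ext X; simp [Finset.mul_sum]

lemma L_inj [Fintype α] (m : ℕ) (ht : m + 4 ≤ Fintype.card α) :
    Function.Injective (L α (m + 2)) := by
  rw [← LinearMap.ker_eq_bot, LinearMap.ker_eq_bot']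
  intro a ha
  have hX : ∀ X : Finset α, X.card = m + 2 → ∑ i ∈ X, a i = 0 := fun X hX =>
    congrFun ha ⟨X, hX⟩
  funext e
  exact point_zero Finset.univ (m + 2) (by omega) (by rw [Finset.card_univ]; omega) a
    (fun V _ hV => hX V hV) e (Finset.mem_univ e)

end CutRank

open CutRank in
lemma cutMatrix_row (t k : ℕ) (P : BalancedPartition t k) (F : Finset (Fin t) → ℚ) :
    (cutMatrix t k).mulVec (fun X => F X.1) P = T P.1.toList F ∧
    P.1.toList.Pairwise Disjoint ∧ U P.1.toList = Finset.univ := by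
  have hd : P.1.toList.Pairwise Disjoint := by
    have := P.1.nodup_toList
    refine List.Pairwise.imp_of_mem ?_ this
    intro V W hV hW hVW
    rw [Finset.mem_toList] at hV hW
    rw [Finset.disjoint_left]
    intro x hx hx'
    exact hVW ((P.2.2.2 x).unique ⟨hV, hx⟩ ⟨hW, hx'⟩)
  have hU : U P.1.toList = Finset.univ := by
    ext x
    simp only [mem_U, Finset.mem_toList, Finset.mem_univ, iff_true]
    obtain ⟨S, hS, -⟩ := P.2.2.2 x
    exact ⟨S, hS⟩
  refine ⟨?_, hd, hU⟩
  rw [T_eq_sum _ hd, hU]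
  simp only [Finset.subset_univ, true_and, Finset.mem_toList]
  have hcard : ∀ X : Finset (Fin t), (∀ V ∈ P.1, (X ∩ V).card = 1) → X.card = k := by
    intro X hX
    have h1 : X = P.1.biUnion (fun V => X ∩ V) := by
      ext x
      simp only [Finset.mem_biUnion, Finset.mem_inter]
      obtain ⟨S, hS, -⟩ := P.2.2.2 x
      exact ⟨fun h => ⟨S, hS.1, h, hS.2⟩, fun ⟨_, _, h, _⟩ => h⟩
    rw [h1, Finset.card_biUnion, Finset.sum_congr rfl hX]
    · simp [P.2.1]
    · intro V hV W hW hVW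
      refine Finset.disjoint_left.2 ?_
      intro x hx hx'
      exact hVW ((P.2.2.2 x).unique ⟨hV, (Finset.mem_inter.1 hx).2⟩
        ⟨hW, (Finset.mem_inter.1 hx').2⟩)
  simp only [Matrix.mulVec, dotProduct, cutMatrix, ite_mul, one_mul, zero_mul]
  rw [← Finset.sum_filter]
  refine Finset.sum_bij (fun X _ => X.1) ?_ ?_ ?_ ?_
  · intro X hX
    simpa using hX
  · intro X _ Y _ h
    exact Subtype.ext h
  · intro X hX
    simp only [Finset.mem_filter, Finset.mem_univ, true_and] at hX
    exact ⟨⟨X, hcard X hX⟩, by simpa using hX, rfl⟩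
  · intro X _; rfl

open CutRank in
lemma exists_partition (t k n : ℕ) (hn : 1 ≤ n) (ht : t = k * n) (hk : 1 ≤ k)
    (Vs : List (Finset (Fin t))) (hl : Vs.length = k) (hd : Vs.Pairwise Disjoint)
    (hc : ∀ V ∈ Vs, V.card = n) :
    ∃ P : BalancedPartition t k, P.1.toList.Perm Vs := by
  have hnd : Vs.Nodup := by
    refine List.Pairwise.imp_of_mem ?_ hd
    rintro V W hV hW hVW rfl
    rw [disjoint_self, Finset.bot_eq_empty] at hVW
    have := hc V hV
    rw [hVW] at this
    simp at this
    omega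
  have hU : U Vs = Finset.univ := by
    apply Finset.eq_univ_of_card
    rw [card_U n Vs hc hd, hl, Fintype.card_fin, ht]
  refine ⟨⟨Vs.toFinset, ?_, ?_, ?_⟩, ?_⟩
  · rw [List.toFinset_card_of_nodup hnd, hl]
  · intro S hS
    rw [hc S (List.mem_toFinset.1 hS), ht, Nat.mul_div_cancel_left _ (by omega)]
  · intro a
    have : a ∈ U Vs := by rw [hU]; simp
    obtain ⟨V, hV, haV⟩ := (mem_U Vs a).1 this
    refine ⟨V, ⟨List.mem_toFinset.2 hV, haV⟩, ?_⟩
    rintro W ⟨hW, haW⟩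
    by_contra hne
    have := hd.forall (List.mem_toFinset.1 hW) hV hne
    exact Finset.disjoint_left.1 this haW haV
  · exact List.toFinset_toList hnd

open CutRank in
lemma T_perm {α : Type*} [DecidableEq α] {Vs Ws : List (Finset α)} (h : Vs.Perm Ws) :
    ∀ g, T Vs g = T Ws g := by
  induction h with
  | nil => intro g; rfl
  | cons V _ ih => intro g; simp only [T]; exact Finset.sum_congr rfl fun v _ => ih _
  | swap V W Vs =>
    intro g
    simp only [T]
    rw [Finset.sum_comm]
    simp only [Finset.insert_comm]
  | trans _ _ h1 h2 => intro g; rw [h1, h2]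

open CutRank in
lemma ker_cutMatrix (m n : ℕ) (hn : 3 ≤ n) :
    LinearMap.ker (cutMatrix ((m + 2) * n) (m + 2)).mulVecLin =
      Submodule.map (L (Fin ((m + 2) * n)) (m + 2))
        (LinearMap.ker (∑ i, LinearMap.proj (R := ℚ) (φ := fun _ : Fin ((m + 2) * n) => ℚ) i)) := by
  obtain ⟨t, ht⟩ : ∃ t, t = (m + 2) * n := ⟨_, rfl⟩
  rw [← ht]
  have hexp : t = m * n + 2 * n := by rw [ht]; ring
  have hmn : m ≤ m * n := Nat.le_mul_of_pos_right m (by omega)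
  have hdiv : t / (m + 2) = n := by rw [ht, Nat.mul_div_cancel_left _ (by omega)]
  have hn0 : (n : ℚ) ≠ 0 := by positivity
  have hrow : ∀ (P : BalancedPartition t (m + 2)) (a : Fin t → ℚ),
      n * (cutMatrix t (m + 2)).mulVec (L (Fin t) (m + 2) a) P = (n : ℚ) ^ (m + 2) * ∑ i, a i := by
    intro P a
    obtain ⟨h1, h2, h3⟩ := cutMatrix_row t (m + 2) P (fun X => ∑ i ∈ X, a i)
    have : (L (Fin t) (m + 2) a) = (fun X => ∑ i ∈ X.1, a i) := rfl
    rw [this, h1, T_lin n a _ (fun V hV => ?_) h2, h3, Finset.length_toList, P.2.1]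
    rw [P.2.2.1 V (Finset.mem_toList.1 hV), hdiv]
  ext f
  simp only [LinearMap.mem_ker, Submodule.mem_map, Matrix.mulVecLin_apply]
  constructor
  · intro hf
    obtain ⟨F, hF⟩ : ∃ F : Finset (Fin t) → ℚ, ∀ X : {S : Finset (Fin t) // S.card = m + 2},
        F X.1 = f X := ⟨fun X => if h : X.card = m + 2 then f ⟨X, h⟩ else 0, fun X => by
          simp [X.2]⟩
    have hFf : f = fun X => F X.1 := by funext X; rw [hF]
    have H : ∀ Vs : List (Finset (Fin t)), Vs.length = m + 2 → Vs.Pairwise Disjoint →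
        (∀ V ∈ Vs, V.card = n) → T Vs F = 0 := by
      intro Vs hl hd hc
      obtain ⟨P, hP⟩ := exists_partition t (m + 2) n (by omega) ht (by omega) Vs hl hd hc
      rw [← T_perm hP, ← (cutMatrix_row t (m + 2) P F).1, ← hFf, hf]
      rfl
    obtain ⟨a, ha⟩ := affine_form m (by simp; omega) F
      (fun u w a b h1 h2 h3 h4 h5 h6 Y hY y1 y2 y3 y4 =>
        four_term n m hn (by simp [ht]) F H u w a b h1 h2 h3 h4 h5 h6 Y hY y1 y2 y3 y4)
    have hfa : L (Fin t) (m + 2) a = f := by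
      funext X
      rw [← hF, ha X.1 X.2]
      rfl
    refine ⟨a, ?_, hfa⟩
    have hpart : ∃ P : BalancedPartition t (m + 2), True := by
      have aux : ∀ j ≤ m + 2, ∃ Vs : List (Finset (Fin t)), Vs.length = j ∧
          Vs.Pairwise Disjoint ∧ ∀ V ∈ Vs, V.card = n := by
        intro j
        induction j with
        | zero => intro _; exact ⟨[], by simp⟩
        | succ j ih =>
          intro hj
          obtain ⟨Vs, h1, h2, h3⟩ := ih (by omega)
          obtain ⟨Z, hZ, hZ'⟩ := avoid (U Vs) n (by
            rw [card_U n Vs h3 h2, h1, Fintype.card_fin, ht]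
            calc n + j * n = (j + 1) * n := by ring
              _ ≤ _ := Nat.mul_le_mul_right n hj)
          refine ⟨Z :: Vs, by simp [h1], ?_, ?_⟩
          · rw [List.pairwise_cons]
            refine ⟨fun W hW => ?_, h2⟩
            rw [Finset.disjoint_left]
            intro x hx hx'
            exact hZ' x ((mem_U Vs x).2 ⟨W, hW, hx'⟩) hx
          · intro W hW
            rw [List.mem_cons] at hW
            rcases hW with rfl | hW
            · exact hZ
            · exact h3 W hW
      obtain ⟨Vs, h1, h2, h3⟩ := aux (m + 2) le_rfl
      obtain ⟨P, _⟩ := exists_partition t (m + 2) n (by omega) ht (by omega) Vs h1 h2 h3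
      exact ⟨P, trivial⟩
    obtain ⟨P, -⟩ := hpart
    have := hrow P a
    rw [hfa, hf] at this
    simp only [Pi.zero_apply, mul_zero] at this
    have h0 := (mul_eq_zero.1 this.symm).resolve_left (pow_ne_zero _ hn0)
    simpa using h0
  · rintro ⟨a, ha, rfl⟩
    funext P
    have := hrow P a
    have ha' : ∑ i, a i = 0 := by simpa using ha
    rw [ha', mul_zero] at this
    exact (mul_eq_zero.1 this).resolve_left hn0

/-- The balanced case of Theorem 4.1: for every `k ≥ 2` and all sufficiently large `t`
divisible by `k`, the balanced-cut intersection matrix has rank `C(t,k) - t + 1`. -/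
theorem balanced_cut_matrix_rank (k : ℕ) (hk : 2 ≤ k) :
    ∃ t₀ : ℕ, ∀ t : ℕ, t₀ ≤ t → k ∣ t →
      (cutMatrix t k).rank = t.choose k - t + 1 := by
  obtain ⟨m, rfl⟩ : ∃ m, k = m + 2 := ⟨k - 2, by omega⟩
  refine ⟨(m + 2) * 3, ?_⟩
  rintro t ht ⟨n, rfl⟩
  have hn : 3 ≤ n := Nat.le_of_mul_le_mul_left ht (by omega)
  have hexp : (m + 2) * n = m * n + 2 * n := by ring
  have hmn : m ≤ m * n := Nat.le_mul_of_pos_right m (by omega)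
  have hker := ker_cutMatrix m n hn
  have hrn := LinearMap.finrank_range_add_finrank_ker (cutMatrix ((m + 2) * n) (m + 2)).mulVecLin
  have hinj := CutRank.L_inj (α := Fin ((m + 2) * n)) m (by rw [Fintype.card_fin]; omega)
  have hC : Fintype.card {S : Finset (Fin ((m + 2) * n)) // S.card = m + 2}
      = ((m + 2) * n).choose (m + 2) := by
    rw [Fintype.card_finset_len, Fintype.card_fin]
  have hle := LinearMap.finrank_le_finrank_of_injective hinj
  rw [Module.finrank_fintype_fun_eq_card, Module.finrank_fintype_fun_eq_card, hC,
    Fintype.card_fin] at hle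
  have hs := LinearMap.finrank_range_add_finrank_ker
    (∑ i, LinearMap.proj (R := ℚ) (φ := fun _ : Fin ((m + 2) * n) => ℚ) i)
  have hsurj : LinearMap.range
      (∑ i, LinearMap.proj (R := ℚ) (φ := fun _ : Fin ((m + 2) * n) => ℚ) i) = ⊤ := by
    rw [LinearMap.range_eq_top]
    intro c
    refine ⟨Pi.single ⟨0, by omega⟩ c, ?_⟩
    simp [LinearMap.sum_apply]
  rw [hsurj, finrank_top, Module.finrank_self, Module.finrank_fintype_fun_eq_card,
    Fintype.card_fin] at hs
  rw [hker, ← LinearEquiv.finrank_eq (Submodule.equivMapOfInjective _ hinj _),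
    Module.finrank_fintype_fun_eq_card, hC] at hrn
  unfold Matrix.rank
  omega
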